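/- arXiv:0810.0587 — 2 statements merged into one kernel-verified Lean document; each statement's English description precedes it below -/
import Mathlib

section
/- Let X be a real Banach space such that the norm of X is Fréchet differentiable at every nonzero point and the dual norm of X* is Fréchet differentiable at every nonzero point, and let K ⊆ X be a Čebyšev set. If d_K is Gateaux differentiable at every x ∈ X \ K, then K is convex. -/
open Filter Topology

/-- A function `f : X → ℝ` is Gateaux differentiable at `x` with Gateaux derivative the
continuous linear functional `A` if for every `y`, `(f (x + t y) - f x)/t → A y` as `t → 0`. -/
def GateauxDiffAt {X : Type*} [NormedAddCommGroup X] [NormedSpace ℝ X]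
    (f : X → ℝ) (x : X) (A : X →L[ℝ] ℝ) : Prop :=
  ∀ y : X, Tendsto (fun t : ℝ => (f (x + t • y) - f x) / t) (𝓝[≠] 0) (𝓝 (A y))

/-!
If `v` is a nearest point to `x ∉ K` in `K` and `d_K` is differentiable at `x` along `x - v`, then
`d_K` grows at unit speed there. Ekeland's variational principle turns this infinitesimal growth
into steps of length one that gain almost one in `d_K`. Iterating them, a convex combination
`c ∉ K` of `a, b ∈ K` is the centre of the first of an increasing sequence of balls that miss `K`,
whose radii grow by one and whose centres move by at most one. Separating their union from `a` and
from `b` gives norm-one functionals `p` and `q`, which satisfy `‖p + q‖ = 2` because both are almost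
norming for the direction in which the centres recede. So `p = q` as soon as `X*` is strictly
convex, and a single functional cannot separate `c` from both `a` and `b`. This is Vlasov's theorem.

Strict convexity of `X*` comes from the two smoothness assumptions: by Šmulian's lemma, Fréchet
differentiability of the dual norm makes every functional attain its norm, and at a point of
smoothness only one norm-one functional attains it.
-/

open Metric NormedSpace

section Ekeland

variable {E : Type*} {f : E → ℝ} {σ : ℝ}

theorem add_mul_dist_le_trans [PseudoMetricSpace E] (hσ : 0 ≤ σ) {x y z : E}
    (hxy : f y + σ * dist x y ≤ f x) (hyz : f z + σ * dist y z ≤ f y) :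
    f z + σ * dist x z ≤ f x := by
  grw [dist_triangle x y z]
  linarith

-- The step to `y` realises at least half of the total decrease of `f` still available from `x`.
theorem exists_add_mul_dist_le_forall_sub_le_sub [PseudoMetricSpace E]
    (hbdd : BddBelow (Set.range f)) (x : E) :
    ∃ y, f y + σ * dist x y ≤ f x ∧ ∀ z, f z + σ * dist x z ≤ f x → f y - f z ≤ f x - f y := by
  set T : Set ℝ := f '' {z | f z + σ * dist x z ≤ f x}
  have hT : BddBelow T := hbdd.mono (Set.image_subset_range _ _)
  have hxT : f x ∈ T := ⟨x, by simp, rfl⟩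
  have hinf : ∀ z, f z + σ * dist x z ≤ f x → sInf T ≤ f z := fun z hz => csInf_le hT ⟨z, hz, rfl⟩
  rcases (csInf_le hT hxT).eq_or_lt with hmin | hlt
  · exact ⟨x, by simp, fun z hz => by linarith [hinf z hz]⟩
  · obtain ⟨_, ⟨y, hy, rfl⟩, hyT⟩ :=
      exists_lt_of_csInf_lt ⟨_, hxT⟩ (show sInf T < (sInf T + f x) / 2 by linarith)
    exact ⟨y, hy, fun z hz => by linarith [hinf z hz]⟩

theorem exists_seq_add_mul_dist_le [PseudoMetricSpace E] (hbdd : BddBelow (Set.range f))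
    (hσ : 0 ≤ σ) (x : E) :
    ∃ u : ℕ → E, u 0 = x ∧ (∀ m n, m ≤ n → f (u n) + σ * dist (u m) (u n) ≤ f (u m)) ∧
      ∀ n z, f z + σ * dist (u n) z ≤ f (u n) →
        f (u (n + 1)) - f z ≤ f (u n) - f (u (n + 1)) := by
  choose next hnext_le hnext_sub using
    fun y => exists_add_mul_dist_le_forall_sub_le_sub (σ := σ) hbdd y
  refine ⟨fun n => next^[n] x, rfl, fun m n hmn => ?_, fun n => ?_⟩
  · induction n, hmn using Nat.le_induction with
    | base => simp
    | succ n _ ih =>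
      simp only [Function.iterate_succ_apply']
      exact add_mul_dist_le_trans hσ ih (hnext_le _)
  · simp only [Function.iterate_succ_apply']
    exact hnext_sub _

theorem ekeland_variational_principle [MetricSpace E] [CompleteSpace E]
    (hf : LowerSemicontinuous f) (hbdd : BddBelow (Set.range f)) (hσ : 0 < σ) (x : E) :
    ∃ y, f y + σ * dist x y ≤ f x ∧ ∀ z, f z + σ * dist y z ≤ f y → z = y := by
  obtain ⟨u, rfl, hu, hu_sub⟩ := exists_seq_add_mul_dist_le hbdd hσ.le x
  have hanti : Antitone (f ∘ u) := fun m n hmn => by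
    have : 0 ≤ σ * dist (u m) (u n) := by positivity
    simp only [Function.comp_apply]
    linarith [hu m n hmn]
  obtain ⟨l, hl⟩ : ∃ l, Tendsto (f ∘ u) atTop (𝓝 l) :=
    ⟨_, tendsto_atTop_ciInf hanti (hbdd.mono (Set.range_comp_subset_range _ _))⟩
  have hl_le : ∀ n, l ≤ f (u n) := hanti.le_of_tendsto hl
  have hcauchy : CauchySeq u := by
    refine cauchySeq_of_le_tendsto_0' (fun n => (f (u n) - l) / σ) (fun m n hmn => ?_) ?_
    · rw [le_div_iff₀' hσ]
      linarith [hu m n hmn, hl_le n]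
    · simpa using (hl.sub_const l).div_const σ
  obtain ⟨y, hy⟩ := cauchySeq_tendsto_of_complete hcauchy
  have huy : ∀ n, f y + σ * dist (u n) y ≤ f (u n) := fun n =>
    have hclosed : IsClosed {z | f z + σ * dist (u n) z ≤ f (u n)} :=
      (hf.add (by fun_prop : Continuous fun z => σ * dist (u n) z).lowerSemicontinuous)
        |>.isClosed_preimage (f (u n))
    hclosed.mem_of_tendsto hy ((eventually_ge_atTop n).mono (hu n))
  have hyl : f y ≤ l := ge_of_tendsto' hl fun n => by
    have : 0 ≤ σ * dist (u n) y := by positivity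
    simp only [Function.comp_apply]
    linarith [huy n]
  refine ⟨y, huy 0, fun z hyz => ?_⟩
  have hl' : Tendsto (fun n => f (u (n + 1))) atTop (𝓝 l) := (tendsto_add_atTop_iff_nat 1).2 hl
  have hlz : l - f z ≤ l - l :=
    le_of_tendsto_of_tendsto' (hl'.sub_const _) (hl.sub hl') fun n =>
      hu_sub n z (add_mul_dist_le_trans hσ.le (huy n) hyz)
  have hdist : σ * dist y z ≤ 0 := by linarith
  exact (dist_le_zero.1 (nonpos_of_mul_nonpos_right hdist hσ)).symm

theorem exists_mem_closedBall_add_mul_le [MetricSpace E] [CompleteSpace E]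
    (hf : UpperSemicontinuous f) {x : E} {R : ℝ} (hR : 0 ≤ R)
    (hbdd : BddAbove (f '' closedBall x R)) (hσ : 0 < σ)
    (hgrow : ∀ y, f x ≤ f y → ∃ᶠ z in 𝓝[≠] y, f y + σ * dist y z ≤ f z) :
    ∃ y ∈ closedBall x R, f x + σ * R ≤ f y := by
  have : CompleteSpace (closedBall x R) := isClosed_closedBall.completeSpace_coe
  have hbdd' : BddBelow (Set.range fun y : closedBall x R => -f y) := by
    obtain ⟨M, hM⟩ := hbdd
    exact ⟨-M, by rintro _ ⟨y, rfl⟩; exact neg_le_neg (hM ⟨y, y.2, rfl⟩)⟩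
  obtain ⟨⟨y, hyR⟩, hxy, hmax⟩ := ekeland_variational_principle
    (hf.neg.comp continuous_subtype_val) hbdd' hσ ⟨x, mem_closedBall_self hR⟩
  replace hxy : f x + σ * dist x y ≤ f y := by
    have : -f y + σ * dist x y ≤ -f x := hxy
    linarith
  rcases (mem_closedBall'.1 hyR).eq_or_lt with hR' | hR'
  · exact ⟨y, hyR, hR' ▸ hxy⟩
  have hball : ∀ᶠ z in 𝓝[≠] y, z ∈ ball x R :=
    mem_nhdsWithin_of_mem_nhds (isOpen_ball.mem_nhds (mem_ball'.2 hR'))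
  have hxy' : f x ≤ f y := le_trans (le_add_of_nonneg_right (by positivity)) hxy
  obtain ⟨z, ⟨hyz, hzR⟩, hne⟩ :=
    ((hgrow y hxy').and_eventually hball |>.and_eventually self_mem_nhdsWithin).exists
  have hzy := hmax ⟨z, ball_subset_closedBall hzR⟩ (show -f z + σ * dist y z ≤ -f y by linarith)
  exact absurd (congrArg Subtype.val hzy) hne

theorem exists_seq_dist_le_one_forall_add_lt [MetricSpace E] [CompleteSpace E] {C : NNReal}
    (hf : LipschitzWith C f) {c : E} {ε : ℝ} (hc : ε < f c)
    (hgrow : ∀ y, ε < f y → ∀ σ < 1, ∃ᶠ z in 𝓝[≠] y, f y + σ * dist y z ≤ f z) :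
    ∃ y : ℕ → E, y 0 = c ∧ (∀ n, dist (y n) (y (n + 1)) ≤ 1) ∧ ∀ n : ℕ, n + ε < f (y n) := by
  have hstep : ∀ (n : ℕ) (y : E), n + ε < f y →
      ∃ y', dist y y' ≤ 1 ∧ (n + 1 : ℕ) + ε < f y' := by
    intro n y hy
    obtain ⟨σ, hσ, hσ1⟩ : ∃ σ, max 0 (n + 1 + ε - f y) < σ ∧ σ < 1 :=
      exists_between (max_lt one_pos (by linarith))
    obtain ⟨hσ0, hσy⟩ := max_lt_iff.1 hσ
    obtain ⟨y', hyy', hfy'⟩ := exists_mem_closedBall_add_mul_le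
      hf.continuous.upperSemicontinuous zero_le_one
      (hf.isBounded_image isBounded_closedBall).bddAbove hσ0
      fun z hz => hgrow z (by linarith [n.cast_nonneg (α := ℝ)]) σ hσ1
    exact ⟨y', mem_closedBall'.1 hyy', by push_cast; linarith⟩
  choose! next hdist hnext using hstep
  let y : ℕ → E := fun n => Nat.rec c next n
  have hy : ∀ n : ℕ, n + ε < f (y n) := fun n => by
    induction n with
    | zero => simpa [y] using hc
    | succ n ih => exact hnext n _ ih
  exact ⟨y, rfl, fun n => hdist n _ (hy n), hy⟩

end Ekeland

section Functionals

variable {E : Type*} [NormedAddCommGroup E] [NormedSpace ℝ E]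

theorem apply_add_mul_opNorm_le_of_forall_mem_ball {f : StrongDual ℝ E} {y : E} {r M : ℝ}
    (hr : 0 < r) (h : ∀ z ∈ ball y r, f z ≤ M) : f y + r * ‖f‖ ≤ M := by
  have hclosed : ∀ z ∈ closedBall y r, f z ≤ M := fun z hz =>
    le_on_closure h f.continuous.continuousOn continuousOn_const
      (by rwa [closure_ball y hr.ne'])
  have hbound : ‖f‖ ≤ (M - f y) / r := by
    refine f.opNorm_bound_of_ball_bound hr _ fun z hz => ?_
    refine Real.norm_eq_abs (f z) ▸ abs_le'.2 ⟨?_, ?_⟩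
    · linarith [map_add f y z, hclosed (y + z) (by simpa using hz)]
    · linarith [map_sub f y z, hclosed (y - z) (by simpa [dist_eq_norm] using hz)]
  rw [le_div_iff₀' hr] at hbound
  linarith

theorem exists_seq_norm_le_one_tendsto_apply (f : StrongDual ℝ E) :
    ∃ u : ℕ → E, (∀ n, ‖u n‖ ≤ 1) ∧ Tendsto (fun n => f (u n)) atTop (𝓝 ‖f‖) := by
  have happrox : ∀ n : ℕ, ∃ x, ‖x‖ ≤ 1 ∧ ‖f‖ - 1 / (n + 1) ≤ f x := by
    intro n
    by_contra! hlt
    have hle := apply_add_mul_opNorm_le_of_forall_mem_ball one_pos fun z (hz : z ∈ ball 0 1) =>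
      (hlt z (mem_ball_zero_iff.1 hz).le).le
    rw [map_zero, zero_add, one_mul] at hle
    exact absurd hle (not_le.2 (sub_lt_self _ Nat.one_div_pos_of_nat))
  choose u hu hfu using happrox
  refine ⟨u, hu, tendsto_of_tendsto_of_tendsto_of_le_of_le ?_ tendsto_const_nhds hfu fun n => ?_⟩
  · simpa using (tendsto_one_div_add_atTop_nhds_zero_nat (𝕜 := ℝ)).const_sub ‖f‖
  · simpa using (le_abs_self _).trans (f.le_of_opNorm_le_of_le le_rfl (hu n))

theorem exists_norm_eq_one_forall_apply_add_le {ι : Type*} [Nonempty ι] {y : ι → E} {r : ι → ℝ}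
    {k : E} (hr : ∀ i, 0 < r i) (hdir : Directed (· ⊆ ·) fun i => ball (y i) (r i))
    (hk : ∀ i, k ∉ ball (y i) (r i)) :
    ∃ p : StrongDual ℝ E, ‖p‖ = 1 ∧ ∀ i, p (y i) + r i ≤ p k := by
  obtain ⟨f, hf⟩ := geometric_hahn_banach_open_point
    (hdir.convex_iUnion fun i => convex_ball (y i) (r i)) (isOpen_iUnion fun _ => isOpen_ball)
    (by simpa only [Set.mem_iUnion, not_exists] using hk)
  have hball : ∀ i, f (y i) + r i * ‖f‖ ≤ f k := fun i =>
    apply_add_mul_opNorm_le_of_forall_mem_ball (hr i) fun z hz =>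
      (hf z (Set.mem_iUnion.2 ⟨i, hz⟩)).le
  have hf0 : f ≠ 0 := by
    obtain ⟨i⟩ := ‹Nonempty ι›
    rintro rfl
    simpa using hf (y i) (Set.mem_iUnion.2 ⟨i, mem_ball_self (hr i)⟩)
  have hf_pos : 0 < ‖f‖ := norm_pos_iff.2 hf0
  refine ⟨‖f‖⁻¹ • f, by simp [norm_smul, hf_pos.ne'], fun i => ?_⟩
  calc ‖f‖⁻¹ * f (y i) + r i = ‖f‖⁻¹ * (f (y i) + r i * ‖f‖) := by field_simp
    _ ≤ ‖f‖⁻¹ * f k := by gcongr; exact hball i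

theorem eq_of_forall_apply_add_le [StrictConvexSpace ℝ (StrongDual ℝ E)] {p q : StrongDual ℝ E}
    (hp : ‖p‖ = 1) (hq : ‖q‖ = 1) {y : ℕ → E} (hy : ∀ n, dist (y n) (y (n + 1)) ≤ 1) {M N : ℝ}
    (hpy : ∀ n, p (y n) + n ≤ M) (hqy : ∀ n, q (y n) + n ≤ N) : p = q := by
  refine eq_of_norm_eq_of_norm_add_eq (hp.trans hq.symm)
    (le_antisymm (norm_add_le p q) (le_of_not_gt fun hlt => ?_))
  have hdist : ∀ n : ℕ, ‖y 0 - y n‖ ≤ n := fun n => by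
    simpa [dist_eq_norm] using dist_le_range_sum_of_dist_le n fun {k} _ => hy k
  obtain ⟨n, hn⟩ := exists_nat_gt ((M + N - (p + q) (y 0)) / (2 - ‖p + q‖))
  rw [hp, hq, one_add_one_eq_two] at hlt
  rw [div_lt_iff₀ (sub_pos.2 hlt)] at hn
  have hupper : (p + q) (y 0 - y n) ≤ ‖p + q‖ * n :=
    (le_abs_self _).trans ((p + q).le_of_opNorm_le_of_le le_rfl (hdist n))
  simp only [map_sub, add_apply] at hupper hn
  linarith [hpy n, hqy n]

theorem apply_eq_lineDeriv_norm {f : StrongDual ℝ E} {x v : E} (hf : ‖f‖ ≤ 1) (hfx : f x = ‖x‖)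
    (hx : LineDifferentiableAt ℝ (fun y : E => ‖y‖) x v) :
    f v = lineDeriv ℝ (fun y : E => ‖y‖) x v := by
  have hmin : IsLocalMin (fun t : ℝ => ‖x + t • v‖ - f (x + t • v)) 0 :=
    Eventually.of_forall fun t => by
      simpa [hfx] using (le_abs_self _).trans (f.le_of_opNorm_le hf (x + t • v))
  have hderiv := hx.hasLineDerivAt.sub (f.hasFDerivAt (x := x).hasLineDerivAt v)
  linarith [hmin.hasDerivAt_eq_zero hderiv]

theorem tendsto_fderiv_norm_of_tendsto_apply {ι : Type*} {l : Filter ι} {F : ι → StrongDual ℝ E}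
    {p : E} (hp : DifferentiableAt ℝ (fun y : E => ‖y‖) p) (hF : ∀ i, ‖F i‖ ≤ 1)
    (hFp : Tendsto (fun i => F i p) l (𝓝 ‖p‖)) :
    Tendsto F l (𝓝 (fderiv ℝ (fun y : E => ‖y‖) p)) := by
  set D := fderiv ℝ (fun y : E => ‖y‖) p
  refine Metric.tendsto_nhds.2 fun ε hε => ?_
  obtain ⟨δ, hδ, hball⟩ := Metric.eventually_nhds_iff_ball.1
    ((hasFDerivAt_iff_isLittleO_nhds_zero.1 hp.hasFDerivAt).def (show 0 < ε / 3 by positivity))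
  have hεδ : 0 < ε / 3 * δ := by positivity
  filter_upwards [hFp.eventually (lt_mem_nhds (sub_lt_self ‖p‖ hεδ))] with i hi
  have hsub : ∀ h ∈ ball 0 δ, (F i - D) h ≤ 2 * (ε / 3 * δ) := by
    intro h hh
    have hFh : F i (p + h) ≤ ‖p + h‖ := by
      simpa using (le_abs_self _).trans ((F i).le_of_opNorm_le (hF i) (p + h))
    have hDh : ‖p + h‖ - ‖p‖ - D h ≤ ε / 3 * ‖h‖ := (le_abs_self _).trans (hball h hh)
    have hhδ : ε / 3 * ‖h‖ ≤ ε / 3 * δ := by gcongr; exact (mem_ball_zero_iff.1 hh).le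
    rw [map_add] at hFh
    rw [sub_apply]
    linarith
  have hnorm := apply_add_mul_opNorm_le_of_forall_mem_ball hδ hsub
  rw [map_zero, zero_add] at hnorm
  rw [dist_eq_norm]
  nlinarith

end Functionals

section StrictConvexDual

variable {X : Type*} [NormedAddCommGroup X] [NormedSpace ℝ X] [CompleteSpace X]

theorem exists_norm_le_one_apply_eq_norm {f : StrongDual ℝ X}
    (hf : DifferentiableAt ℝ (fun g : StrongDual ℝ X => ‖g‖) f) :
    ∃ x : X, ‖x‖ ≤ 1 ∧ f x = ‖f‖ := by
  obtain ⟨u, hu, hfu⟩ := exists_seq_norm_le_one_tendsto_apply f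
  let J := inclusionInDoubleDualLi ℝ (E := X)
  have hJu : Tendsto (J ∘ u) atTop (𝓝 (fderiv ℝ (fun g : StrongDual ℝ X => ‖g‖) f)) :=
    tendsto_fderiv_norm_of_tendsto_apply hf (fun n => (J.norm_map (u n)).trans_le (hu n)) hfu
  obtain ⟨x, hx⟩ : fderiv ℝ (fun g : StrongDual ℝ X => ‖g‖) f ∈ Set.range J :=
    J.isometry.isClosedEmbedding.isClosed_range.mem_of_tendsto hJu
      (Eventually.of_forall fun n => ⟨u n, rfl⟩)
  have hux : Tendsto u atTop (𝓝 x) := J.isometry.isEmbedding.tendsto_nhds_iff.2 (hx ▸ hJu)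
  exact ⟨x, le_of_tendsto' hux.norm hu,
    tendsto_nhds_unique ((f.continuous.tendsto x).comp hux) hfu⟩

theorem strictConvexSpace_dual_of_differentiableAt_norm
    (hX : ∀ x : X, x ≠ 0 → ∀ v, LineDifferentiableAt ℝ (fun y : X => ‖y‖) x v)
    (hX' : ∀ f : StrongDual ℝ X, f ≠ 0 → DifferentiableAt ℝ (fun g : StrongDual ℝ X => ‖g‖) f) :
    StrictConvexSpace ℝ (StrongDual ℝ X) := by
  refine StrictConvexSpace.of_norm_add_ne_two fun p q hp hq hpq hadd => hpq ?_
  have hpq0 : p + q ≠ 0 := fun h => by simp [h] at hadd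
  obtain ⟨x, hx, hx2⟩ := exists_norm_le_one_apply_eq_norm (hX' _ hpq0)
  have hpx : p x ≤ ‖x‖ := by simpa using (le_abs_self _).trans (p.le_of_opNorm_le hp.le x)
  have hqx : q x ≤ ‖x‖ := by simpa using (le_abs_self _).trans (q.le_of_opNorm_le hq.le x)
  rw [hadd, add_apply] at hx2
  have hx0 : x ≠ 0 := by
    rintro rfl
    simp at hx2
  ext v
  rw [apply_eq_lineDeriv_norm hp.le (by linarith) (hX x hx0 v),
    apply_eq_lineDeriv_norm hq.le (by linarith) (hX x hx0 v)]

end StrictConvexDual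

section NearestPoint

variable {X : Type*} [NormedAddCommGroup X] [NormedSpace ℝ X] {K : Set X} {x v : X}

theorem GateauxDiffAt.hasLineDerivAt {f : X → ℝ} {A : X →L[ℝ] ℝ} (h : GateauxDiffAt f x A)
    (y : X) : HasLineDerivAt ℝ f (A y) x y :=
  hasLineDerivAt_iff_tendsto_slope_zero.2 <| by
    simpa only [smul_eq_mul, div_eq_inv_mul] using h y

theorem eq_infDist_of_hasLineDerivAt_infDist {d : ℝ} (hv : v ∈ K) (hxv : ‖x - v‖ = infDist x K)
    (hd : HasLineDerivAt ℝ (fun y => infDist y K) d x (x - v)) : d = infDist x K := by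
  have hmax : IsLocalMax (fun t : ℝ => infDist (x + t • (x - v)) K - (1 + t) * infDist x K) 0 := by
    filter_upwards [lt_mem_nhds (show (-1 : ℝ) < 0 by norm_num)] with t ht
    have hdist : infDist (x + t • (x - v)) K ≤ (1 + t) * infDist x K :=
      calc infDist (x + t • (x - v)) K ≤ dist (x + t • (x - v)) v := infDist_le_dist_of_mem hv
        _ = ‖(1 + t) • (x - v)‖ := by rw [dist_eq_norm]; congr 1; module
        _ = (1 + t) * infDist x K := by
          rw [norm_smul, hxv, Real.norm_of_nonneg (by linarith)]
    simpa using hdist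
  have hderiv := HasDerivAt.sub hd (((hasDerivAt_id (0 : ℝ)).const_add 1).mul_const (infDist x K))
  linarith [hmax.hasDerivAt_eq_zero hderiv]

theorem frequently_infDist_add_mul_dist_le (hv : v ∈ K) (hxv : ‖x - v‖ = infDist x K)
    (hx : x ≠ v) (hd : LineDifferentiableAt ℝ (fun y => infDist y K) x (x - v)) {σ : ℝ}
    (hσ : σ < 1) :
    ∃ᶠ z in 𝓝[≠] x, infDist x K + σ * dist x z ≤ infDist z K := by
  have hw : 0 < ‖x - v‖ := norm_sub_pos_iff.2 hx
  have hslope := hd.hasLineDerivAt.tendsto_slope_zero_right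
  rw [eq_infDist_of_hasLineDerivAt_infDist hv hxv hd.hasLineDerivAt, ← hxv] at hslope
  have hgrow : ∀ᶠ t : ℝ in 𝓝[>] 0,
      infDist x K + σ * dist x (x + t • (x - v)) ≤ infDist (x + t • (x - v)) K := by
    filter_upwards [hslope.eventually (lt_mem_nhds (mul_lt_of_lt_one_left hw hσ)),
      self_mem_nhdsWithin] with t ht ht0
    rw [smul_eq_mul, lt_inv_mul_iff₀ ht0] at ht
    rw [dist_self_add_right, norm_smul, Real.norm_of_nonneg (le_of_lt ht0)]
    linarith
  have hray : Tendsto (fun t : ℝ => x + t • (x - v)) (𝓝[>] 0) (𝓝[≠] x) := by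
    refine tendsto_nhdsWithin_iff.2 ⟨?_, ?_⟩
    · have : Continuous fun t : ℝ => x + t • (x - v) := by fun_prop
      simpa using (this.tendsto 0).mono_left nhdsWithin_le_nhds
    · filter_upwards [self_mem_nhdsWithin] with t ht0
      simpa [sub_eq_zero, hx] using ne_of_gt ht0
  exact hray.frequently hgrow.frequently

end NearestPoint

section Vlasov

variable {X : Type*} [NormedAddCommGroup X] [NormedSpace ℝ X] [CompleteSpace X]
  [StrictConvexSpace ℝ (StrongDual ℝ X)] {K : Set X}

theorem convex_of_frequently_infDist_add_mul_dist_le (hK : IsClosed K)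
    (hgrow : ∀ x ∉ K, ∀ σ < 1, ∃ᶠ z in 𝓝[≠] x, infDist x K + σ * dist x z ≤ infDist z K) :
    Convex ℝ K := by
  intro a ha b hb s t hs ht hst
  by_contra hc
  set c := s • a + t • b
  set ε := infDist c K / 2
  have hc_pos : 0 < infDist c K := (hK.notMem_iff_infDist_pos ⟨a, ha⟩).1 hc
  have hε : 0 < ε := half_pos hc_pos
  obtain ⟨y, hy0, hy_step, hy_far⟩ := exists_seq_dist_le_one_forall_add_lt
    (lipschitz_infDist_pt K) (half_lt_self hc_pos) fun z hz =>
      hgrow z fun hzK => (hε.trans hz).ne' (infDist_zero_of_mem hzK)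
  have hmono : Monotone fun n : ℕ => ball (y n) (n + ε) := monotone_nat_of_le_succ fun n =>
    ball_subset_ball' (by push_cast; linarith [hy_step n])
  have hsep : ∀ k ∈ K, ∃ p : StrongDual ℝ X, ‖p‖ = 1 ∧ ∀ n : ℕ, p (y n) + (n + ε) ≤ p k :=
    fun k hk => exists_norm_eq_one_forall_apply_add_le (fun n => by positivity)
      hmono.directed_le fun n hkn =>
        (hy_far n).not_ge ((infDist_le_dist_of_mem hk).trans (mem_ball'.1 hkn).le)
  obtain ⟨p, hp, hpa⟩ := hsep a ha
  obtain ⟨q, hq, hqb⟩ := hsep b hb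
  obtain rfl : p = q := eq_of_forall_apply_add_le hp hq hy_step
    (fun n => (by linarith [hpa n] : _ ≤ p a)) fun n => (by linarith [hqb n] : _ ≤ q b)
  have hpc : p c + ε ≤ p c := convex_halfSpace_ge p.isLinear (p c + ε)
    (by simpa [hy0] using hpa 0) (by simpa [hy0] using hqb 0) hs ht hst
  linarith

theorem chebyshev_convex_of_gateaux_general
    (hK : ∀ x ∉ K, ∃ v ∈ K, ‖x - v‖ = infDist x K ∧
      LineDifferentiableAt ℝ (fun y => infDist y K) x (x - v)) :
    Convex ℝ K := by
  have hclosed : IsClosed K := isClosed_of_closure_subset fun x hx => by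
    by_contra hxK
    obtain ⟨v, hv, hxv, -⟩ := hK x hxK
    rw [(mem_closure_iff_infDist_zero ⟨v, hv⟩).1 hx, norm_sub_eq_zero_iff] at hxv
    exact hxK (hxv ▸ hv)
  refine convex_of_frequently_infDist_add_mul_dist_le hclosed fun x hx σ hσ => ?_
  obtain ⟨v, hv, hxv, hd⟩ := hK x hx
  exact frequently_infDist_add_mul_dist_le hv hxv (fun h => hx (h ▸ hv)) hd hσ

end Vlasov

/-- Suppose the norm of the real Banach space `X` is Fréchet differentiable at every
nonzero point and the dual norm of `X*` is Fréchet differentiable at every nonzero point,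
and `K ⊆ X` is a Čebyšev set. If the distance function `d_K` is Gateaux differentiable at
every `x ∉ K`, then `K` is convex. -/
theorem chebyshev_convex_of_gateaux {X : Type*} [NormedAddCommGroup X] [NormedSpace ℝ X]
    [CompleteSpace X]
    (hX : ∀ x : X, x ≠ 0 → DifferentiableAt ℝ (fun y : X => ‖y‖) x)
    (hX' : ∀ f : X →L[ℝ] ℝ, f ≠ 0 → DifferentiableAt ℝ (fun g : X →L[ℝ] ℝ => ‖g‖) f)
    (K : Set X)
    (hcheb : ∀ x : X, ∃! v : X, v ∈ K ∧ ‖x - v‖ = Metric.infDist x K)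
    (hdiff : ∀ x ∉ K, ∃ A : X →L[ℝ] ℝ,
      GateauxDiffAt (fun y : X => Metric.infDist y K) x A) :
    Convex ℝ K := by
  have := strictConvexSpace_dual_of_differentiableAt_norm
    (fun x hx _ => (hX x hx).lineDifferentiableAt) hX'
  refine chebyshev_convex_of_gateaux_general fun x hx => ?_
  obtain ⟨v, ⟨hv, hxv⟩, -⟩ := hcheb x
  obtain ⟨A, hA⟩ := hdiff x hx
  exact ⟨v, hv, hxv, (hA.hasLineDerivAt _).lineDifferentiableAt⟩
end

section
/- Let X be a real Banach space such that the norm of X is Fréchet differentiable at every nonzero point and the dual norm of X* is Fréchet differentiable at every nonzero point, and let K ⊆ X be a Čebyšev set. If for every x ∈ X \ K, with x̄ the unique nearest point to x in K, one has d_K⁻(x; x − x̄) = d_K(x), then K is convex. -/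
open Filter Topology

/-!
Off `K` the distance function `d_K` increases at slope arbitrarily close to `1` somewhere nearby, so
by Ekeland's variational principle one can climb from any `x ∉ K` in unit steps, each gaining almost
one unit of `d_K`, for ever. The balls around these points with suitable radii below `d_K` are
nested, avoid `K`, contain `x`, and have radii tending to infinity.

The union `U` of such balls is open and convex. Seen from a fixed point of `U`, the directions to
the centres form a maximizing sequence, in the unit ball, for every norm-one functional bounded
above on `U`. Differentiability of the dual norm makes this sequence converge (Šmulian), and
differentiability of the norm makes the norming functional of its limit unique. Hence all the
functionals separating `U` from points outside it coincide, so the complement of `U` is convex. As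
it contains `K` but not `x`, the point `x` is not in the convex hull of `K`.
-/

open scoped NNReal

section Ekeland

variable {α : Type*} [PseudoMetricSpace α] {f : α → ℝ} {σ : ℝ} {x z : α}

/-- The points that can be reached from `x` with `f` increasing at mean rate at least `σ`: the
upper sections of the order of Ekeland's variational principle, here for maximization. -/
def ascentSet (f : α → ℝ) (σ : ℝ) (x : α) : Set α :=
  {z | f x + σ * dist z x ≤ f z}

lemma mem_ascentSet : z ∈ ascentSet f σ x ↔ f x + σ * dist z x ≤ f z :=
  Iff.rfl

lemma self_mem_ascentSet : x ∈ ascentSet f σ x := by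
  simp [ascentSet]

lemma ascentSet_subset_of_mem (hσ : 0 ≤ σ) (hz : z ∈ ascentSet f σ x) :
    ascentSet f σ z ⊆ ascentSet f σ x := by
  intro w hw
  have htri := mul_le_mul_of_nonneg_left (dist_triangle w z x) hσ
  rw [mem_ascentSet] at hz hw ⊢
  linarith

lemma isClosed_ascentSet (hf : UpperSemicontinuous f) : IsClosed (ascentSet f σ x) := by
  have hdist : Continuous fun z ↦ -(σ * dist z x) := by fun_prop
  convert (hf.add hdist.upperSemicontinuous).isClosed_preimage (f x) using 1
  ext z
  rw [mem_ascentSet, Set.mem_preimage, Set.mem_Ici, ← sub_eq_add_neg, le_sub_iff_add_le]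

lemma exists_mem_ascentSet_forall_le_add (hbdd : BddAbove (Set.range f)) (x : α) {ε : ℝ}
    (hε : 0 < ε) : ∃ z ∈ ascentSet f σ x, ∀ w ∈ ascentSet f σ x, f w ≤ f z + ε := by
  have hne : (f '' ascentSet f σ x).Nonempty := ⟨f x, x, self_mem_ascentSet, rfl⟩
  obtain ⟨_, ⟨z, hz, rfl⟩, hsup⟩ := exists_lt_of_lt_csSup hne (sub_lt_self _ hε)
  refine ⟨z, hz, fun w hw ↦ ?_⟩
  have := le_csSup (hbdd.mono (Set.image_subset_range f _)) (Set.mem_image_of_mem f hw)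
  linarith

/-- Almost maximal choices make the diameters of the successive ascent sets tend to zero. -/
lemma exists_seq_ascentSet_subset_closedBall (hbdd : BddAbove (Set.range f)) (hσ : 0 < σ)
    (x : α) : ∃ u : ℕ → α, u 0 ∈ ascentSet f σ x ∧ (∀ n, u (n + 1) ∈ ascentSet f σ (u n)) ∧
      ∀ n, ascentSet f σ (u n) ⊆ Metric.closedBall (u n) ((1 / 2) ^ n / σ) := by
  choose next hnext hmax using fun (n : ℕ) (x : α) ↦
    exists_mem_ascentSet_forall_le_add (σ := σ) hbdd x (pow_pos (one_half_pos (α := ℝ)) n)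
  let v : ℕ → α := fun n ↦ Nat.rec x next n
  have hv (n : ℕ) : v (n + 1) ∈ ascentSet f σ (v n) := hnext n (v n)
  refine ⟨fun n ↦ v (n + 1), hv 0, fun n ↦ hv (n + 1), fun n w hw ↦ ?_⟩
  have hle : f w ≤ f (v (n + 1)) + (1 / 2) ^ n :=
    hmax n (v n) w (ascentSet_subset_of_mem hσ.le (hv n) hw)
  rw [mem_ascentSet] at hw
  rw [Metric.mem_closedBall, le_div_iff₀' hσ]
  linarith

end Ekeland

section EkelandComplete

variable {α : Type*} [MetricSpace α] [CompleteSpace α] {f : α → ℝ} {σ : ℝ}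

theorem exists_mem_ascentSet_ascentSet_eq_singleton (hf : UpperSemicontinuous f)
    (hbdd : BddAbove (Set.range f)) (hσ : 0 < σ) (x : α) :
    ∃ m ∈ ascentSet f σ x, ascentSet f σ m = {m} := by
  obtain ⟨u, hu₀, hu, hball⟩ := exists_seq_ascentSet_subset_closedBall hbdd hσ x
  have hanti : Antitone fun n ↦ ascentSet f σ (u n) :=
    antitone_nat_of_succ_le fun n ↦ ascentSet_subset_of_mem hσ.le (hu n)
  have hrad : Tendsto (fun n : ℕ ↦ (1 / 2 : ℝ) ^ n / σ) atTop (𝓝 0) := by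
    simpa only [zero_div] using (tendsto_pow_atTop_nhds_zero_of_lt_one
      one_half_pos.le one_half_lt_one).div_const σ
  have hcauchy : CauchySeq u := cauchySeq_of_le_tendsto_0' _
    (fun n k hnk ↦ Metric.mem_closedBall'.1 (hball n (hanti hnk self_mem_ascentSet))) hrad
  obtain ⟨m, hm⟩ := cauchySeq_tendsto_of_complete hcauchy
  have hmem (n : ℕ) : m ∈ ascentSet f σ (u n) :=
    (isClosed_ascentSet hf).mem_of_tendsto hm <|
      (eventually_ge_atTop n).mono fun k hnk ↦ hanti hnk self_mem_ascentSet
  refine ⟨m, ascentSet_subset_of_mem hσ.le hu₀ (hmem 0),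
    Set.eq_singleton_iff_unique_mem.2 ⟨self_mem_ascentSet, fun w hw ↦ ?_⟩⟩
  have hw' : Tendsto u atTop (𝓝 w) := tendsto_iff_dist_tendsto_zero.2 <|
    squeeze_zero (fun _ ↦ dist_nonneg) (fun n ↦ Metric.mem_closedBall'.1
      (hball n (ascentSet_subset_of_mem hσ.le (hmem n) hw))) hrad
  exact tendsto_nhds_unique hw' hm

lemma exists_add_le_mul_dist_le {x : α} {c : ℝ} (hf : UpperSemicontinuous f) (hσ : 0 < σ)
    (hc : 0 ≤ c) (hasc : ∀ z, f x ≤ f z → ∃ᶠ w in 𝓝[≠] z, w ∈ ascentSet f σ z) :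
    ∃ z, f x + c ≤ f z ∧ σ * dist z x ≤ c := by
  -- Truncating `f` at the target value makes it bounded above.
  let g : α → ℝ := fun z ↦ min (f z) (f x + c)
  have hg : UpperSemicontinuous g := hf.inf upperSemicontinuous_const
  have hgx : g x = f x := min_eq_left (by linarith)
  obtain ⟨m, hxm, hm⟩ := exists_mem_ascentSet_ascentSet_eq_singleton hg
    ⟨f x + c, Set.forall_mem_range.2 fun z ↦ min_le_right _ _⟩ hσ x
  rw [mem_ascentSet, hgx] at hxm
  have hreach : f x + c ≤ f m := by
    by_contra! hlt
    have hgm : g m = f m := min_eq_left hlt.le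
    have hfm : f x ≤ f m :=
      (le_add_of_nonneg_right (by positivity)).trans (hxm.trans_eq hgm)
    obtain ⟨w, hw, hwlt, hwm⟩ := ((hasc m hfm).and_eventually
      ((hf m _ hlt).filter_mono nhdsWithin_le_nhds |>.and self_mem_nhdsWithin)).exists
    have hgw : w ∈ ascentSet g σ m := by
      rw [mem_ascentSet, hgm, show g w = f w from min_eq_left hwlt.le]
      exact hw
    exact hwm (hm.subset hgw)
  exact ⟨m, hreach, by linarith [min_le_right (f m) (f x + c)]⟩

lemma exists_seq_dist_le_one_add_lt {x : α} {a : ℝ} (hf : UpperSemicontinuous f) (hx : a < f x)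
    (hasc : ∀ z, a < f z → ∀ σ < 1, ∃ᶠ w in 𝓝[≠] z, w ∈ ascentSet f σ z) :
    ∃ y : ℕ → α, y 0 = x ∧ (∀ n, dist (y (n + 1)) (y n) ≤ 1) ∧ ∀ n, a + n < f (y n) := by
  have hstep (n : ℕ) (p : α) (hp : a + n < f p) :
      ∃ z, dist z p ≤ 1 ∧ a + (n + 1 : ℕ) < f z := by
    obtain ⟨σ, hσ, hσ₁⟩ := exists_between (show max 0 (a + n + 1 - f p) < 1 by
      rw [max_lt_iff]; constructor <;> linarith)
    obtain ⟨hσ₀, hσp⟩ := max_lt_iff.1 hσ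
    have ha : a < f p := by linarith [n.cast_nonneg (α := ℝ)]
    obtain ⟨z, hz, hdist⟩ := exists_add_le_mul_dist_le hf hσ₀ hσ₀.le
      fun z hz ↦ hasc z (ha.trans_le hz) σ hσ₁
    refine ⟨z, le_of_mul_le_mul_left (by rwa [mul_one]) hσ₀, ?_⟩
    push_cast
    linarith
  choose! next hdist hlt using hstep
  let y : ℕ → α := fun n ↦ Nat.rec x next n
  have hy (n : ℕ) : a + n < f (y n) := by
    induction n with
    | zero => simpa [y] using hx
    | succ n ih => exact hlt n (y n) ih
  exact ⟨y, rfl, fun n ↦ hdist n (y n) (hy n), hy⟩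

end EkelandComplete

section Slope

variable {E : Type*} [NormedAddCommGroup E] [NormedSpace ℝ E] {f : E → ℝ} {x v : E}

lemma neg_mul_norm_le_slope {C : ℝ≥0} (hf : LipschitzWith C f) {t : ℝ} (ht : 0 < t) :
    -(C * ‖v‖) ≤ (f (x + t • v) - f x) / t := by
  have hdist := hf.dist_le_mul x (x + t • v)
  rw [dist_self_add_right, norm_smul, Real.norm_of_nonneg ht.le, Real.dist_eq] at hdist
  rw [le_div_iff₀ ht]
  linarith [le_abs_self (f x - f (x + t • v))]

lemma frequently_mem_ascentSet_of_norm_le_liminf {C : ℝ≥0} (hf : LipschitzWith C f) (hv : v ≠ 0)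
    (hlim : ‖v‖ ≤ liminf (fun t : ℝ ↦ (f (x + t • v) - f x) / t) (𝓝[>] 0)) {σ : ℝ}
    (hσ : σ < 1) : ∃ᶠ z in 𝓝[≠] x, z ∈ ascentSet f σ x := by
  have hbdd : IsBoundedUnder (· ≥ ·) (𝓝[>] 0) fun t : ℝ ↦ (f (x + t • v) - f x) / t :=
    isBoundedUnder_of_eventually_ge <|
      eventually_mem_nhdsWithin.mono fun t ht ↦ neg_mul_norm_le_slope hf ht
  have hrate : ∀ᶠ t : ℝ in 𝓝[>] 0, σ * ‖v‖ < (f (x + t • v) - f x) / t :=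
    eventually_lt_of_lt_liminf ((mul_lt_of_lt_one_left (norm_pos_iff.2 hv) hσ).trans_le hlim) hbdd
  have hray : Tendsto (fun t : ℝ ↦ x + t • v) (𝓝[>] 0) (𝓝[≠] x) := by
    refine tendsto_nhdsWithin_iff.2 ⟨?_, eventually_mem_nhdsWithin.mono fun t ht ↦ ?_⟩
    · have hcont : Continuous fun t : ℝ ↦ x + t • v := by fun_prop
      simpa only [zero_smul, add_zero] using (hcont.tendsto 0).mono_left nhdsWithin_le_nhds
    · simpa only [Set.mem_compl_iff, Set.mem_singleton_iff, add_eq_left, smul_eq_zero, not_or]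
        using ⟨(Set.mem_Ioi.1 ht).ne', hv⟩
  refine hray.frequently (Eventually.frequently ?_)
  filter_upwards [hrate, self_mem_nhdsWithin] with t hslope ht
  rw [Set.mem_Ioi] at ht
  rw [lt_div_iff₀ ht] at hslope
  rw [mem_ascentSet, dist_self_add_left, norm_smul, Real.norm_of_nonneg ht.le]
  linarith

end Slope

section Smulian

lemma apply_eq_lineDeriv_of_le {E : Type*} [AddCommGroup E] [Module ℝ E] {φ : E → ℝ} {x v : E}
    (hφ : LineDifferentiableAt ℝ φ x v) {L : E →ₗ[ℝ] ℝ} (hle : ∀ y, L y ≤ φ y)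
    (hx : L x = φ x) : L v = lineDeriv ℝ φ x v := by
  have hL : HasDerivAt (fun t : ℝ ↦ L (x + t • v)) (L v) 0 := by
    simpa only [map_add, map_smul, smul_eq_mul] using
      (hasDerivAt_mul_const (L v)).const_add (L x)
  have hmin : IsMinOn (fun y ↦ φ y - L y) Set.univ x := fun y _ ↦ by
    simpa only [hx, sub_self, Set.mem_ofPred_eq, sub_nonneg] using hle y
  exact (sub_eq_zero.1 <| hmin.hasLineDerivAt_eq_zero
    (HasDerivAt.sub hφ.hasLineDerivAt hL) (by simp)).symm

variable {ι : Type*} {l : Filter ι}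

/-- Šmulian's criterion, whose classical case has `φ` the dual norm and `L i` the evaluations at
points of the unit ball. -/
theorem tendsto_of_hasFDerivAt_of_le {E : Type*} [NormedAddCommGroup E] [NormedSpace ℝ E]
    {φ : E → ℝ} {A : E →L[ℝ] ℝ} {x : E} (hφ : HasFDerivAt φ A x) {L : ι → E →L[ℝ] ℝ}
    (hle : ∀ᶠ i in l, ∀ y, L i y ≤ φ y) (hx : Tendsto (fun i ↦ L i x) l (𝓝 (φ x))) :
    Tendsto L l (𝓝 A) := by
  refine Metric.nhds_basis_closedBall.tendsto_right_iff.2 fun ε hε ↦ ?_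
  obtain ⟨δ, hδ, hball⟩ := Metric.nhds_basis_closedBall.eventually_iff.1 <|
    (hasFDerivAt_iff_isLittleO_nhds_zero.1 hφ).def (half_pos hε)
  have hgap : ∀ᶠ i in l, φ x - ε / 2 * δ < L i x :=
    hx.eventually (lt_mem_nhds (sub_lt_self _ (by positivity)))
  filter_upwards [hle, hgap] with i hi hgap
  have hupper (v : E) (hv : ‖v‖ = 1) : (L i - A) v ≤ ε := by
    have hδv : ‖δ • v‖ = δ := by rw [norm_smul, hv, mul_one, Real.norm_of_nonneg hδ.le]
    have hrem := (le_abs_self _).trans (hball (mem_closedBall_zero_iff.2 hδv.le))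
    have hmin := hi (x + δ • v)
    rw [hδv] at hrem
    simp only [map_add, map_smul, smul_eq_mul] at hrem hmin
    refine le_of_mul_le_mul_left ?_ hδ
    rw [sub_apply]
    linarith
  rw [mem_closedBall_iff_norm]
  refine ContinuousLinearMap.opNorm_le_of_unit_norm hε.le fun v hv ↦ abs_le'.2 ⟨hupper v hv, ?_⟩
  simpa only [map_neg] using hupper (-v) (by rwa [norm_neg])

variable {X : Type*} [NormedAddCommGroup X] [NormedSpace ℝ X]

lemma apply_le_norm_of_norm_le_one {f : X →L[ℝ] ℝ} (hf : ‖f‖ ≤ 1) (y : X) : f y ≤ ‖y‖ :=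
  (le_abs_self _).trans <| (f.le_of_opNorm_le hf y).trans_eq (one_mul _)

lemma exists_tendsto_of_tendsto_apply [CompleteSpace X] [l.NeBot] {f : X →L[ℝ] ℝ}
    (hf : DifferentiableAt ℝ (fun g : X →L[ℝ] ℝ ↦ ‖g‖) f) {u : ι → X}
    (hu : ∀ᶠ i in l, ‖u i‖ ≤ 1) (hfu : Tendsto (fun i ↦ f (u i)) l (𝓝 ‖f‖)) :
    ∃ z, Tendsto u l (𝓝 z) := by
  let J := NormedSpace.inclusionInDoubleDualLi (E := X) ℝ
  have hle : ∀ᶠ i in l, ∀ g : X →L[ℝ] ℝ, J (u i) g ≤ ‖g‖ := hu.mono fun i hi g ↦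
    apply_le_norm_of_norm_le_one (by rwa [J.norm_map]) g
  have hJ : Tendsto (J ∘ u) l (𝓝 (fderiv ℝ (fun g : X →L[ℝ] ℝ ↦ ‖g‖) f)) :=
    tendsto_of_hasFDerivAt_of_le hf.hasFDerivAt hle hfu
  have hcauchy : Cauchy (map u l) := by
    rw [← J.isometry.isUniformInducing.cauchy_map_iff, map_map]
    exact hJ.cauchy_map
  exact CompleteSpace.complete hcauchy

lemma eq_of_tendsto_apply_one [CompleteSpace X] [l.NeBot]
    (hX : ∀ x : X, x ≠ 0 → ∀ v, LineDifferentiableAt ℝ (fun y : X ↦ ‖y‖) x v) {f g : X →L[ℝ] ℝ}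
    (hf' : DifferentiableAt ℝ (fun h : X →L[ℝ] ℝ ↦ ‖h‖) f) (hf : ‖f‖ = 1) (hg : ‖g‖ ≤ 1)
    {u : ι → X} (hu : ∀ᶠ i in l, ‖u i‖ ≤ 1) (hfu : Tendsto (fun i ↦ f (u i)) l (𝓝 1))
    (hgu : Tendsto (fun i ↦ g (u i)) l (𝓝 1)) : f = g := by
  obtain ⟨z, hz⟩ := exists_tendsto_of_tendsto_apply hf' hu (hf ▸ hfu)
  have hfz : f z = 1 := tendsto_nhds_unique ((f.continuous.tendsto z).comp hz) hfu
  have hgz : g z = 1 := tendsto_nhds_unique ((g.continuous.tendsto z).comp hz) hgu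
  have hz₁ : ‖z‖ = 1 :=
    le_antisymm (le_of_tendsto hz.norm hu) (hfz ▸ apply_le_norm_of_norm_le_one hf.le z)
  have hz₀ : z ≠ 0 := norm_pos_iff.1 (hz₁ ▸ one_pos)
  ext v
  calc f v = lineDeriv ℝ (fun y : X ↦ ‖y‖) z v :=
        apply_eq_lineDeriv_of_le (L := f.toLinearMap) (hX z hz₀ v)
          (apply_le_norm_of_norm_le_one hf.le) (hfz.trans hz₁.symm)
    _ = g v := .symm <|
        apply_eq_lineDeriv_of_le (L := g.toLinearMap) (hX z hz₀ v)
          (apply_le_norm_of_norm_le_one hg) (hgz.trans hz₁.symm)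

end Smulian

section GrowingBalls

variable {X : Type*} [NormedAddCommGroup X] [NormedSpace ℝ X]

lemma exists_norm_eq_one_forall_apply_lt {U : Set X} (hconv : Convex ℝ U) (hopen : IsOpen U)
    (hne : U.Nonempty) {k : X} (hk : k ∉ U) :
    ∃ f : X →L[ℝ] ℝ, ‖f‖ = 1 ∧ ∀ a ∈ U, f a < f k := by
  obtain ⟨g, hg⟩ := geometric_hahn_banach_open_point hconv hopen hk
  obtain ⟨x, hx⟩ := hne
  have hg₀ : g ≠ 0 := by
    rintro rfl
    exact lt_irrefl _ (hg x hx)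
  exact ⟨‖g‖⁻¹ • g, norm_smul_inv_norm hg₀,
    fun a ha ↦ mul_lt_mul_of_pos_left (hg a ha) (inv_pos.2 (norm_pos_iff.2 hg₀))⟩

lemma convex_compl_of_unique_bddAbove {U : Set X} (hconv : Convex ℝ U) (hopen : IsOpen U)
    (huniq : ∀ f g : X →L[ℝ] ℝ, ‖f‖ = 1 → ‖g‖ = 1 → BddAbove (f '' U) → BddAbove (g '' U) →
      f = g) : Convex ℝ Uᶜ := by
  rcases U.eq_empty_or_nonempty with rfl | hne
  · simpa only [Set.compl_empty] using convex_univ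
  intro k₀ hk₀ k₁ hk₁ a b ha hb hab hx
  obtain ⟨f, hf, hlt₀⟩ := exists_norm_eq_one_forall_apply_lt hconv hopen hne hk₀
  obtain ⟨g, hg, hlt₁⟩ := exists_norm_eq_one_forall_apply_lt hconv hopen hne hk₁
  obtain rfl : f = g := huniq f g hf hg
    ⟨f k₀, Set.forall_mem_image.2 fun a ha ↦ (hlt₀ a ha).le⟩
    ⟨g k₁, Set.forall_mem_image.2 fun a ha ↦ (hlt₁ a ha).le⟩
  have hhalf : Convex ℝ {y | f (a • k₀ + b • k₁) < f y} :=
    convex_halfSpace_gt f.toLinearMap.isLinear _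
  exact lt_irrefl (f (a • k₀ + b • k₁)) (hhalf (hlt₀ _ hx) (hlt₁ _ hx) ha hb hab)

lemma apply_add_mul_norm_le_of_ball {f : X →L[ℝ] ℝ} {y : X} {r c : ℝ} (hr : 0 < r)
    (hc : ∀ a ∈ Metric.ball y r, f a ≤ c) : f y + r * ‖f‖ ≤ c := by
  have hclosed : ∀ a ∈ Metric.closedBall y r, f a ≤ c := by
    rw [← closure_ball y hr.ne']
    exact fun a ha ↦ closure_minimal hc (isClosed_le f.continuous continuous_const) ha
  have hupper (v : X) (hv : ‖v‖ = 1) : f v ≤ (c - f y) / r := by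
    have hmem : y + r • v ∈ Metric.closedBall y r := by
      rw [mem_closedBall_iff_norm, add_sub_cancel_left, norm_smul, hv, mul_one,
        Real.norm_of_nonneg hr.le]
    have hle := hclosed _ hmem
    rw [map_add, map_smul, smul_eq_mul] at hle
    rw [le_div_iff₀' hr]
    linarith
  have hnonneg : 0 ≤ (c - f y) / r :=
    div_nonneg (sub_nonneg.2 (hc y (Metric.mem_ball_self hr))) hr.le
  have hnorm : ‖f‖ ≤ (c - f y) / r :=
    ContinuousLinearMap.opNorm_le_of_unit_norm hnonneg fun v hv ↦ abs_le'.2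
      ⟨hupper v hv, by simpa only [map_neg] using hupper (-v) (by rwa [norm_neg])⟩
  rw [le_div_iff₀' hr] at hnorm
  linarith

variable {ι : Type*} {l : Filter ι} {y : ι → X} {r : ι → ℝ} {x : X}

lemma eventually_norm_inv_smul_sub_le_one (hr : Tendsto r l atTop)
    (hx : ∀ᶠ i in l, x ∈ Metric.ball (y i) (r i)) :
    ∀ᶠ i in l, ‖(r i)⁻¹ • (x - y i)‖ ≤ 1 := by
  filter_upwards [hr.eventually_gt_atTop 0, hx] with i hri hxi
  rw [norm_smul, norm_inv, Real.norm_of_nonneg hri.le, inv_mul_le_one₀ hri]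
  exact (mem_ball_iff_norm.1 hxi).le

lemma tendsto_apply_inv_smul_sub (hr : Tendsto r l atTop)
    (hx : ∀ᶠ i in l, x ∈ Metric.ball (y i) (r i)) {f : X →L[ℝ] ℝ} (hf : ‖f‖ = 1)
    (hbdd : BddAbove (f '' ⋃ i, Metric.ball (y i) (r i))) :
    Tendsto (fun i ↦ f ((r i)⁻¹ • (x - y i))) l (𝓝 1) := by
  obtain ⟨c, hc⟩ := hbdd
  have hlower : Tendsto (fun i ↦ 1 - (r i)⁻¹ * (c - f x)) l (𝓝 1) := by
    simpa only [zero_mul, sub_zero, Pi.inv_apply] using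
      (hr.inv_tendsto_atTop.mul_const (c - f x)).const_sub 1
  refine tendsto_of_tendsto_of_tendsto_of_le_of_le' hlower tendsto_const_nhds ?_ ?_
  · filter_upwards [hr.eventually_gt_atTop 0] with i hri
    have hcenter : f (y i) + r i * ‖f‖ ≤ c := apply_add_mul_norm_le_of_ball hri fun a ha ↦
      hc (Set.mem_image_of_mem f (Set.mem_iUnion_of_mem i ha))
    rw [hf, mul_one] at hcenter
    calc 1 - (r i)⁻¹ * (c - f x) = (r i)⁻¹ * (r i - (c - f x)) := by field_simp
      _ ≤ (r i)⁻¹ * (f x - f (y i)) :=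
        mul_le_mul_of_nonneg_left (by linarith) (inv_nonneg.2 hri.le)
      _ = f ((r i)⁻¹ • (x - y i)) := by rw [map_smul, map_sub, smul_eq_mul]
  · exact (eventually_norm_inv_smul_sub_le_one hr hx).mono fun i hi ↦
      (apply_le_norm_of_norm_le_one hf.le _).trans hi

theorem convex_compl_iUnion_ball [CompleteSpace X] [Preorder ι] [IsDirectedOrder ι] [Nonempty ι]
    (hX : ∀ x : X, x ≠ 0 → ∀ v, LineDifferentiableAt ℝ (fun y : X ↦ ‖y‖) x v)
    (hX' : ∀ f : X →L[ℝ] ℝ, f ≠ 0 → DifferentiableAt ℝ (fun g : X →L[ℝ] ℝ ↦ ‖g‖) f)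
    (hmono : Monotone fun i ↦ Metric.ball (y i) (r i)) (hr : Tendsto r atTop atTop) :
    Convex ℝ (⋃ i, Metric.ball (y i) (r i))ᶜ := by
  refine convex_compl_of_unique_bddAbove
    (hmono.directed_le.convex_iUnion fun i ↦ convex_ball (y i) (r i))
    (isOpen_iUnion fun i ↦ Metric.isOpen_ball) fun f g hf hg hbddf hbddg ↦ ?_
  obtain ⟨i, hi⟩ := (hr.eventually_gt_atTop 0).exists
  have hx : ∀ᶠ j in atTop, y i ∈ Metric.ball (y j) (r j) :=
    (eventually_ge_atTop i).mono fun j hij ↦ hmono hij (Metric.mem_ball_self hi)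
  have hf₀ : f ≠ 0 := norm_pos_iff.1 (hf ▸ one_pos)
  exact eq_of_tendsto_apply_one hX (hX' f hf₀) hf hg.le (eventually_norm_inv_smul_sub_le_one hr hx)
    (tendsto_apply_inv_smul_sub hr hx hf hbddf) (tendsto_apply_inv_smul_sub hr hx hg hbddg)

end GrowingBalls

section DistanceFunction

variable {α : Type*} [MetricSpace α] {K : Set α}

lemma isClosed_of_forall_exists_dist_eq_infDist
    (hnear : ∀ x ∉ K, ∃ v ∈ K, dist x v = Metric.infDist x K) : IsClosed K := by
  refine isClosed_of_closure_subset fun x hx ↦ ?_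
  by_contra hxK
  obtain ⟨v, hv, hdist⟩ := hnear x hxK
  have hzero : Metric.infDist x K = 0 := (Metric.mem_closure_iff_infDist_zero ⟨v, hv⟩).1 hx
  exact hxK (dist_eq_zero.1 (hdist.trans hzero) ▸ hv)

lemma exists_monotone_ball_subset_compl [CompleteSpace α] {x : α} (hx : 0 < Metric.infDist x K)
    (hasc : ∀ z, 0 < Metric.infDist z K → ∀ σ < 1,
      ∃ᶠ w in 𝓝[≠] z, w ∈ ascentSet (Metric.infDist · K) σ z) :
    ∃ (y : ℕ → α) (r : ℕ → ℝ), (Monotone fun n ↦ Metric.ball (y n) (r n)) ∧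
      Tendsto r atTop atTop ∧ x ∈ Metric.ball (y 0) (r 0) ∧
      ∀ n, Metric.ball (y n) (r n) ⊆ Kᶜ := by
  obtain ⟨a, ha, hax⟩ := exists_between hx
  obtain ⟨y, rfl, hdist, hlt⟩ := exists_seq_dist_le_one_add_lt
    (Metric.continuous_infDist_pt K).upperSemicontinuous hax fun z hz ↦ hasc z (ha.trans hz)
  refine ⟨y, fun n ↦ a + n, monotone_nat_of_le_succ fun n ↦ Metric.ball_subset_ball' ?_,
    tendsto_atTop_add_const_left _ _ tendsto_natCast_atTop_atTop,
    Metric.mem_ball_self (by simpa using ha), fun n ↦ ?_⟩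
  · push_cast
    linarith [dist_comm (y n) (y (n + 1)), hdist n]
  · exact (Metric.ball_subset_ball (hlt n).le).trans Metric.ball_infDist_subset_compl

end DistanceFunction

theorem convex_of_frequently_mem_ascentSet_infDist {X : Type*} [NormedAddCommGroup X]
    [NormedSpace ℝ X] [CompleteSpace X] {K : Set X}
    (hX : ∀ x : X, x ≠ 0 → ∀ v, LineDifferentiableAt ℝ (fun y : X ↦ ‖y‖) x v)
    (hX' : ∀ f : X →L[ℝ] ℝ, f ≠ 0 → DifferentiableAt ℝ (fun g : X →L[ℝ] ℝ ↦ ‖g‖) f)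
    (hK : IsClosed K)
    (hasc : ∀ x ∉ K, ∀ σ < 1, ∃ᶠ z in 𝓝[≠] x, z ∈ ascentSet (Metric.infDist · K) σ x) :
    Convex ℝ K := by
  rcases K.eq_empty_or_nonempty with rfl | hne
  · exact convex_empty
  refine convexHull_eq_self.1 (subset_antisymm (fun x hx ↦ ?_) (subset_convexHull ℝ K))
  by_contra hxK
  obtain ⟨y, r, hmono, hr, hxy, hsub⟩ :=
    exists_monotone_ball_subset_compl ((hK.notMem_iff_infDist_pos hne).1 hxK)
      fun z hz ↦ hasc z ((hK.notMem_iff_infDist_pos hne).2 hz)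
  have hKsub : K ⊆ (⋃ n, Metric.ball (y n) (r n))ᶜ :=
    Set.subset_compl_comm.1 (Set.iUnion_subset hsub)
  exact convexHull_min hKsub (convex_compl_iUnion_ball hX hX' hmono hr) hx
    (Set.mem_iUnion_of_mem 0 hxy)

theorem chebyshev_convex_of_liminf_general {X : Type*} [NormedAddCommGroup X] [NormedSpace ℝ X]
    [CompleteSpace X]
    (hX : ∀ x : X, x ≠ 0 → ∀ v, LineDifferentiableAt ℝ (fun y : X ↦ ‖y‖) x v)
    (hX' : ∀ f : X →L[ℝ] ℝ, f ≠ 0 → DifferentiableAt ℝ (fun g : X →L[ℝ] ℝ ↦ ‖g‖) f)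
    (K : Set X)
    (hliminf : ∀ x ∉ K, ∃ xbar ∈ K, ‖x - xbar‖ = Metric.infDist x K ∧
      Metric.infDist x K ≤ liminf (fun t : ℝ ↦
          (Metric.infDist (x + t • (x - xbar)) K - Metric.infDist x K) / t)
        (𝓝[>] 0)) :
    Convex ℝ K := by
  have hK : IsClosed K := isClosed_of_forall_exists_dist_eq_infDist fun x hx ↦
    let ⟨xbar, hxbar, hdist, _⟩ := hliminf x hx
    ⟨xbar, hxbar, (dist_eq_norm x xbar).trans hdist⟩
  refine convex_of_frequently_mem_ascentSet_infDist hX hX' hK fun x hx σ hσ ↦ ?_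
  obtain ⟨xbar, hxbar, hdist, hle⟩ := hliminf x hx
  have hne : x - xbar ≠ 0 := sub_ne_zero.2 fun h ↦ hx (h ▸ hxbar)
  exact frequently_mem_ascentSet_of_norm_le_liminf (Metric.lipschitz_infDist_pt K) hne
    (hdist.trans_le hle) hσ

/-- Suppose the norm of the real Banach space `X` is Fréchet differentiable at every
nonzero point and the dual norm of `X*` is Fréchet differentiable at every nonzero point,
and `K ⊆ X` is a Čebyšev set. If for every `x ∉ K`, with `x̄` the (unique) nearest point
to `x` in `K`, one has `d_K⁻(x; x - x̄) = liminf_{t→0⁺} (d_K(x + t(x - x̄)) - d_K(x))/t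
= d_K(x)`, then `K` is convex. -/
theorem chebyshev_convex_of_liminf {X : Type*} [NormedAddCommGroup X] [NormedSpace ℝ X]
    [CompleteSpace X]
    (hX : ∀ x : X, x ≠ 0 → DifferentiableAt ℝ (fun y : X => ‖y‖) x)
    (hX' : ∀ f : X →L[ℝ] ℝ, f ≠ 0 → DifferentiableAt ℝ (fun g : X →L[ℝ] ℝ => ‖g‖) f)
    (K : Set X)
    (hcheb : ∀ x : X, ∃! v : X, v ∈ K ∧ ‖x - v‖ = Metric.infDist x K)
    (hliminf : ∀ x ∉ K, ∀ xbar ∈ K, ‖x - xbar‖ = Metric.infDist x K →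
      liminf (fun t : ℝ =>
          (Metric.infDist (x + t • (x - xbar)) K - Metric.infDist x K) / t)
        (𝓝[>] 0) = Metric.infDist x K) :
    Convex ℝ K := by
  refine chebyshev_convex_of_liminf_general (fun x hx v ↦ (hX x hx).lineDifferentiableAt) hX' K
    fun x hx ↦ ?_
  obtain ⟨v, ⟨hv, hdist⟩, -⟩ := hcheb x
  exact ⟨v, hv, hdist, (hliminf x hx v hv hdist).ge⟩
end
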